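/- Let n ≥ 1, δ > 0, and let (A(t))_{t∈ℕ} be a sequence of confidence matrices (row-stochastic n×n matrices with nonnegative real entries) such that for all t: (1) every diagonal entry of A(t) is positive; (2) A(t)_{ij} > 0 ⟺ A(t)_{ji} > 0 for all i,j; (3) every positive entry of A(t) is greater than δ. Then for every pair of time steps t₀ < t₁, the lowest positive entry of the accumulation A(t₀,t₁) := A(t₁−1)···A(t₀) is greater than δ^{n²−n+2}. -/

import Mathlib

open Matrix Filter Finset

/-- A confidence matrix is a row-stochastic matrix with nonnegative entries. -/
def RowStochastic {n : ℕ} (A : Matrix (Fin n) (Fin n) ℝ) : Prop :=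
  (∀ i j, 0 ≤ A i j) ∧ ∀ i, ∑ j, A i j = 1

/-- Backward accumulation `A(0,t) = A(t-1) ⋯ A(0)`. -/
def backProd {n : ℕ} (A : ℕ → Matrix (Fin n) (Fin n) ℝ) : ℕ → Matrix (Fin n) (Fin n) ℝ
  | 0 => 1
  | t + 1 => A t * backProd A t

/-- Accumulation `A(t₀,t₁) = A(t₁-1) ⋯ A(t₀)`. -/
def accum {n : ℕ} (A : ℕ → Matrix (Fin n) (Fin n) ℝ) (t₀ t₁ : ℕ) : Matrix (Fin n) (Fin n) ℝ :=
  backProd (fun s => A (t₀ + s)) (t₁ - t₀)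

/-!
Multiply the factors from right to left, following the column `x = A(t₀,t) e_j`. As the diagonal
entries are positive, the support of `x`, initially `{j}`, can only grow. When it grows, the lower
bound for the nonzero entries loses a factor `δ`, which happens at most `n - 1` times. When it does
not grow, the symmetry of the zero pattern forces every row indexed by the support to vanish off
the support, so that the new entries there are convex combinations of the old nonzero ones and the
lower bound is not affected at all. Positive entries of an accumulation are
therefore at least `δ ^ (n - 1)`.
-/

section OneStep

variable {ι R : Type*} [Fintype ι] [Semiring R] [PartialOrder R]
  {A : Matrix ι ι R} {x : ι → R} {c δ : R} {i : ι}

theorem exists_pos_pos_of_mulVec_apply_ne_zero (hA : ∀ i j, 0 ≤ A i j) (hx : 0 ≤ x)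
    (hi : (A *ᵥ x) i ≠ 0) : ∃ k, 0 < A i k ∧ 0 < x k := by
  obtain ⟨k, -, hk⟩ := exists_ne_zero_of_sum_ne_zero hi
  exact ⟨k, (hA i k).lt_of_ne' (left_ne_zero_of_mul hk),
    (hx k).lt_of_ne' (right_ne_zero_of_mul hk)⟩

section OrderedRing

variable [IsOrderedRing R]

theorem mul_le_mulVec_apply (hA : ∀ i j, 0 ≤ A i j) (hx : 0 ≤ x) (i k : ι) :
    A i k * x k ≤ (A *ᵥ x) i :=
  single_le_sum (f := fun k => A i k * x k) (fun k _ => mul_nonneg (hA i k) (hx k)) (mem_univ k)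

theorem mul_le_mulVec_apply_of_ne_zero (hA : ∀ i j, 0 ≤ A i j)
    (hmin : ∀ i j, 0 < A i j → δ ≤ A i j) (hx : 0 ≤ x) (hc : 0 ≤ c)
    (hcx : ∀ k ∈ Function.support x, c ≤ x k) (hi : (A *ᵥ x) i ≠ 0) : δ * c ≤ (A *ᵥ x) i := by
  obtain ⟨k, hik, hk⟩ := exists_pos_pos_of_mulVec_apply_ne_zero hA hx hi
  calc δ * c ≤ A i k * x k := mul_le_mul (hmin i k hik) (hcx k hk.ne') hc hik.le
    _ ≤ (A *ᵥ x) i := mul_le_mulVec_apply hA hx i k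

theorem le_mulVec_apply_of_mem_rowStochastic [DecidableEq ι]
    (hA : A ∈ rowStochastic R ι) (hcx : ∀ k, 0 < A i k → c ≤ x k) : c ≤ (A *ᵥ x) i := by
  have hterm (k : ι) : A i k * c ≤ A i k * x k := by
    rcases (hA.1 i k).eq_or_lt with h | h
    · simp only [← h, zero_mul, le_refl]
    · exact mul_le_mul_of_nonneg_left (hcx k h) h.le
  calc c = ∑ k, A i k * c := by rw [← sum_mul, sum_row_of_mem_rowStochastic hA, one_mul]
    _ ≤ (A *ᵥ x) i := sum_le_sum fun k _ => hterm k

end OrderedRing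

section StrictOrderedRing

variable [IsStrictOrderedRing R]

theorem mulVec_apply_pos (hA : ∀ i j, 0 ≤ A i j) (hx : 0 ≤ x) {k : ι} (hik : 0 < A i k)
    (hk : 0 < x k) : 0 < (A *ᵥ x) i :=
  (mul_pos hik hk).trans_le (mul_le_mulVec_apply hA hx i k)

theorem support_subset_support_mulVec (hA : ∀ i j, 0 ≤ A i j) (hdiag : ∀ i, 0 < A i i)
    (hx : 0 ≤ x) : Function.support x ⊆ Function.support (A *ᵥ x) := fun i hi =>
  (mulVec_apply_pos hA hx (hdiag i) ((hx i).lt_of_ne' hi)).ne'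

theorem le_mulVec_apply_of_support_mulVec_subset [DecidableEq ι]
    (hA : A ∈ rowStochastic R ι) (hsymm : ∀ i j, 0 < A i j → 0 < A j i) (hx : 0 ≤ x)
    (hsupp : Function.support (A *ᵥ x) ⊆ Function.support x)
    (hcx : ∀ k ∈ Function.support x, c ≤ x k) (hi : i ∈ Function.support x) : c ≤ (A *ᵥ x) i := by
  refine le_mulVec_apply_of_mem_rowStochastic hA fun k hik => hcx k (hsupp ?_)
  -- A positive entry `A i k` leading out of the support would enlarge it, as `A k i` is positive.
  exact (mulVec_apply_pos hA.1 hx (hsymm i k hik) ((hx i).lt_of_ne' hi)).ne'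

end StrictOrderedRing

end OneStep

/-- The invariant of the induction over the factors: `x` is nonnegative and its nonzero entries are
at least `δ ^ (s - 1)`, where `s` is the number of these entries. The subtraction is not truncated,
since the bound only concerns vectors with a nonzero entry. -/
structure IsSupportBounded {ι R : Type*} [Semiring R] [PartialOrder R] (δ : R) (x : ι → R) :
    Prop where
  nonneg : 0 ≤ x
  pow_le : ∀ i ∈ Function.support x, δ ^ ((Function.support x).ncard - 1) ≤ x i

section Product

variable {ι R : Type*} [DecidableEq ι] [Semiring R] [PartialOrder R] [IsStrictOrderedRing R]
  {δ : R} {x : ι → R}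

theorem isSupportBounded_single (δ : R) (j : ι) : IsSupportBounded δ (Pi.single j (1 : R)) where
  nonneg := Pi.single_nonneg.2 zero_le_one
  pow_le i hi := by
    have hsupp : Function.support (Pi.single j (1 : R)) = {j} := Pi.support_single_of_ne one_ne_zero
    obtain rfl : i = j := by rwa [hsupp] at hi
    simp only [hsupp, Set.ncard_singleton, Nat.sub_self, pow_zero, Pi.single_eq_same, le_refl]

variable [Fintype ι]

theorem IsSupportBounded.mulVec (hx : IsSupportBounded δ x) (hδ : 0 ≤ δ) {A : Matrix ι ι R}
    (hA : A ∈ rowStochastic R ι) (hdiag : ∀ i, 0 < A i i)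
    (hsymm : ∀ i j, 0 < A i j → 0 < A j i) (hmin : ∀ i j, 0 < A i j → δ ≤ A i j) :
    IsSupportBounded δ (A *ᵥ x) where
  nonneg := nonneg_mulVec_of_mem_rowStochastic hA hx.nonneg
  pow_le i hi := by
    have hsub := support_subset_support_mulVec hA.1 hdiag hx.nonneg
    rcases hsub.eq_or_ssubset with heq | hgrow
    · rw [← heq] at hi ⊢
      exact le_mulVec_apply_of_support_mulVec_subset hA hsymm hx.nonneg heq.ge hx.pow_le hi
    · have hδ1 : δ ≤ 1 := (hmin i i (hdiag i)).trans (le_one_of_mem_rowStochastic hA)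
      have hcard := Set.ncard_lt_ncard hgrow
      obtain ⟨k, -, hk⟩ := exists_pos_pos_of_mulVec_apply_ne_zero hA.1 hx.nonneg hi
      have hpos : 0 < (Function.support x).ncard := (Set.ncard_pos).2 ⟨k, hk.ne'⟩
      calc δ ^ ((Function.support (A *ᵥ x)).ncard - 1) ≤ δ ^ ((Function.support x).ncard - 1 + 1) :=
            pow_le_pow_of_le_one hδ hδ1 (by omega)
        _ = δ * δ ^ ((Function.support x).ncard - 1) := pow_succ' _ _
        _ ≤ (A *ᵥ x) i := mul_le_mulVec_apply_of_ne_zero hA.1 hmin hx.nonneg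
            (pow_nonneg hδ _) hx.pow_le hi

theorem IsSupportBounded.prod_mulVec (hx : IsSupportBounded δ x) (hδ : 0 ≤ δ)
    {L : List (Matrix ι ι R)} (hstoch : ∀ A ∈ L, A ∈ rowStochastic R ι)
    (hdiag : ∀ A ∈ L, ∀ i, 0 < A i i) (hsymm : ∀ A ∈ L, ∀ i j, 0 < A i j → 0 < A j i)
    (hmin : ∀ A ∈ L, ∀ i j, 0 < A i j → δ ≤ A i j) : IsSupportBounded δ (L.prod *ᵥ x) := by
  induction L with
  | nil => simpa only [List.prod_nil, one_mulVec] using hx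
  | cons A L ih =>
    rw [List.forall_mem_cons] at hstoch hdiag hsymm hmin
    rw [List.prod_cons, ← mulVec_mulVec]
    exact (ih hstoch.2 hdiag.2 hsymm.2 hmin.2).mulVec hδ hstoch.1 hdiag.1 hsymm.1 hmin.1

theorem accumulation_lower_bound_general (hδ : 0 ≤ δ) (hδ1 : δ ≤ 1) {L : List (Matrix ι ι R)}
    (hstoch : ∀ A ∈ L, A ∈ rowStochastic R ι) (hdiag : ∀ A ∈ L, ∀ i, 0 < A i i)
    (hsymm : ∀ A ∈ L, ∀ i j, 0 < A i j → 0 < A j i)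
    (hmin : ∀ A ∈ L, ∀ i j, 0 < A i j → δ ≤ A i j) {i j : ι} (hij : 0 < L.prod i j) :
    δ ^ (Fintype.card ι - 1) ≤ L.prod i j := by
  have hcol := (isSupportBounded_single δ j).prod_mulVec hδ hstoch hdiag hsymm hmin
  rw [mulVec_single_one] at hcol
  have hcard : (Function.support (L.prod.col j)).ncard ≤ Fintype.card ι :=
    Nat.card_eq_fintype_card (α := ι) ▸ Set.ncard_le_card _
  exact (pow_le_pow_of_le_one hδ hδ1 (Nat.sub_le_sub_right hcard 1)).trans (hcol.pow_le i hij.ne')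

end Product

theorem rowStochastic_iff_mem_rowStochastic {n : ℕ} {A : Matrix (Fin n) (Fin n) ℝ} :
    RowStochastic A ↔ A ∈ rowStochastic ℝ (Fin n) :=
  mem_rowStochastic_iff_sum.symm

theorem backProd_eq_list_prod {n : ℕ} (A : ℕ → Matrix (Fin n) (Fin n) ℝ) (t : ℕ) :
    backProd A t = ((List.range t).map A).reverse.prod := by
  induction t with
  | zero => rfl
  | succ t ih => simp [backProd, ih, List.range_succ]

theorem accum_eq_list_prod {n : ℕ} (A : ℕ → Matrix (Fin n) (Fin n) ℝ) (t₀ t₁ : ℕ) :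
    accum A t₀ t₁ = ((List.range (t₁ - t₀)).map fun s => A (t₀ + s)).reverse.prod :=
  backProd_eq_list_prod _ _

/-- **Proposition 2.** Under positive diagonals, symmetric zero pattern and a uniform lower
bound `δ` on positive entries, every positive entry of any accumulation `A(t₀,t₁)` is
greater than `δ^(n²-n+2)`. -/
theorem accumulation_lower_bound
    (n : ℕ) (hn : 1 ≤ n) (δ : ℝ) (hδ : 0 < δ)
    (A : ℕ → Matrix (Fin n) (Fin n) ℝ)
    (hstoch : ∀ t, RowStochastic (A t))
    (hdiag : ∀ t i, 0 < A t i i)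
    (hsym : ∀ t i j, 0 < A t i j ↔ 0 < A t j i)
    (hmin : ∀ t i j, 0 < A t i j → δ < A t i j) :
    ∀ t₀ t₁ : ℕ, t₀ < t₁ → ∀ i j : Fin n,
      0 < accum A t₀ t₁ i j → δ ^ (n ^ 2 - n + 2) < accum A t₀ t₁ i j := by
  intro t₀ t₁ _ i j hij
  have hδ1 : δ < 1 := (hmin 0 i i (hdiag 0 i)).trans_le
    (le_one_of_mem_rowStochastic (rowStochastic_iff_mem_rowStochastic.1 (hstoch 0)))
  have hexp : n - 1 < n ^ 2 - n + 2 := by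
    have := two_mul_le_add_sq n 1
    omega
  have hfactor {p : Matrix (Fin n) (Fin n) ℝ → Prop} (hp : ∀ t, p (A t)) :
      ∀ B ∈ ((List.range (t₁ - t₀)).map fun s => A (t₀ + s)).reverse, p B := by
    simp [hp]
  rw [accum_eq_list_prod] at hij ⊢
  calc δ ^ (n ^ 2 - n + 2) < δ ^ (n - 1) := pow_lt_pow_right_of_lt_one₀ hδ hδ1 hexp
    _ = δ ^ (Fintype.card (Fin n) - 1) := by rw [Fintype.card_fin]
    _ ≤ _ := accumulation_lower_bound_general hδ.le hδ1.le
      (hfactor fun t => rowStochastic_iff_mem_rowStochastic.1 (hstoch t)) (hfactor hdiag)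
      (hfactor fun t i j => (hsym t i j).1) (hfactor fun t i j hij => (hmin t i j hij).le) hij
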